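/- arXiv:2406.09510 — 4 statements merged into one kernel-verified Lean document; each statement's English description precedes it below -/
import Mathlib

section
/- For every real u with 0.841 < u < 1, setting v = √(1−u²), u₀ = u, v₀ = v, u₁ = v, v₁ = −u, the following linear system is infeasible: there exist no nonnegative reals q(i,j,k,l,t), indexed by i,j,k,l ∈ {0,1} and t ∈ {cw, acw}, such that (i) for all i,j,k,l: q(i,j,k,l,cw) + q(i,j,k,l,acw) = ½(u_i u_j u_k u_l + v_i v_j v_k v_l)², and (ii) for each of the four index positions and each value b ∈ {0,1}, the single-index marginals satisfy Σ (over the other three indices) q(…,cw) = v_b²/2 and Σ (over the other three indices) q(…,acw) = u_b²/2 (e.g. Σ_{j,k,l} q(i,j,k,l,cw) = v_i²/2 and Σ_{j,k,l} q(i,j,k,l,acw) = u_i²/2, and similarly for the positions of j, k and l). -/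
noncomputable def uco (u : ℝ) : Fin 2 → ℝ := ![u, Real.sqrt (1 - u ^ 2)]
noncomputable def vco (u : ℝ) : Fin 2 → ℝ := ![Real.sqrt (1 - u ^ 2), -u]

/-!
Weak linear programming duality on the clockwise weights `q(·, cw)`. Count each index `0` as `-1`
and each index `1` as `+1`, and let the excess of a configuration be the sum of its four signs. The
prescribed marginals force the excess, summed against the clockwise weights, to be `2 (u² - v²)`. As
these weights are nonnegative and at most `½ (uᵢ uⱼ uₖ uₗ + vᵢ vⱼ vₖ vₗ)²`, this sum is bounded by
that of the positive part of the excess against the latter, to which only the configurations with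
three or four indices equal to `1` contribute. Using `u² + v² = 1`, the bound equals
`2 (u² - v²) + 4 v⁴ (1 - 2 u⁴)`, which is less than `2 (u² - v²)` as soon as `u⁴ > 1/2`.
-/

section WeakDuality

variable {X ι α R : Type*} [Fintype X] [DecidableEq α]

/-- The marginal at `a` of the weights `c` on `X` along the coordinate `π`: the total weight of the
fibre of `π` over `a`. -/
def marginal [AddCommMonoid R] (c : X → R) (π : X → α) (a : α) : R :=
  ∑ x with π x = a, c x

variable [Fintype ι] [Fintype α]

theorem sum_mul_marginal [NonUnitalNonAssocSemiring R]
    (c : X → R) (π : ι → X → α) (w : ι → α → R) :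
    ∑ p, ∑ a, w p a * marginal c (π p) a = ∑ x, (∑ p, w p (π p x)) * c x := by
  have integrate_coordinate (p : ι) :
      ∑ a, w p a * marginal c (π p) a = ∑ x, w p (π p x) * c x := by
    simp only [marginal, Finset.mul_sum, Finset.sum_filter]
    rw [Finset.sum_comm]
    simp only [mul_ite, mul_zero, Finset.sum_ite_eq, Finset.mem_univ, if_true]
  simp only [integrate_coordinate, Finset.sum_mul]
  exact Finset.sum_comm

theorem sum_mul_marginal_le_sum_posPart_mul [Ring R] [Lattice R] [IsOrderedRing R]
    {c P : X → R} (hc : ∀ x, 0 ≤ c x) (hcP : ∀ x, c x ≤ P x) (π : ι → X → α) (w : ι → α → R) :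
    ∑ p, ∑ a, w p a * marginal c (π p) a ≤ ∑ x, (∑ p, w p (π p x))⁺ * P x := by
  rw [sum_mul_marginal]
  refine Finset.sum_le_sum fun x _ ↦ ?_
  exact mul_le_mul (le_posPart _) (hcP x) (hc x) (posPart_nonneg _)

end WeakDuality

section SquareNetwork

/-- The values of the four indices of the square network. -/
abbrev SquareConfig : Type := Fin 2 × Fin 2 × Fin 2 × Fin 2

/-- The value of a configuration at each of the four index positions. -/
def squareIndex : Fin 4 → SquareConfig → Fin 2 :=
  ![fun x ↦ x.1, fun x ↦ x.2.1, fun x ↦ x.2.2.1, fun x ↦ x.2.2.2]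

/-- The prescribed total of the clockwise and anticlockwise weights of a configuration. -/
noncomputable def squareWeight (u : ℝ) : SquareConfig → ℝ := fun (i, j, k, l) ↦
  (1 / 2) * (uco u i * uco u j * uco u k * uco u l + vco u i * vco u j * vco u k * vco u l) ^ 2

/-- The dual certificate: the contribution of one index to `excess`. -/
def indexSign : Fin 2 → ℝ := ![-1, 1]

/-- The number of indices equal to `1` minus the number of indices equal to `0`. -/
def excess (x : SquareConfig) : ℝ :=
  ∑ p, indexSign (squareIndex p x)

variable {u : ℝ}

theorem sum_indexSign_mul_sq_vco (hu : u ^ 2 ≤ 1) :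
    ∑ b, indexSign b * (vco u b ^ 2 / 2) = u ^ 2 - 1 / 2 := by
  have hv : Real.sqrt (1 - u ^ 2) ^ 2 = 1 - u ^ 2 := Real.sq_sqrt (sub_nonneg.2 hu)
  simp only [Fin.sum_univ_two, indexSign, vco, Matrix.cons_val_zero, Matrix.cons_val_one, hv]
  ring

theorem sum_posPart_excess_mul (P : SquareConfig → ℝ) :
    ∑ x, (excess x)⁺ * P x =
      4 * P (1, 1, 1, 1) +
        2 * (P (0, 1, 1, 1) + P (1, 0, 1, 1) + P (1, 1, 0, 1) + P (1, 1, 1, 0)) := by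
  simp only [Fintype.sum_prod_type, Fin.sum_univ_two, Fin.sum_univ_four, excess, squareIndex,
    indexSign, Matrix.cons_val, posPart_def]
  norm_num
  ring

theorem sum_posPart_excess_mul_squareWeight (hu : u ^ 2 ≤ 1) :
    ∑ x, (excess x)⁺ * squareWeight u x =
      4 * (u ^ 2 - 1 / 2) + 4 * (1 - u ^ 2) ^ 2 * (1 - 2 * u ^ 4) := by
  rw [sum_posPart_excess_mul]
  have hv : Real.sqrt (1 - u ^ 2) ^ 2 = 1 - u ^ 2 := Real.sq_sqrt (sub_nonneg.2 hu)
  simp only [squareWeight, uco, vco, Matrix.cons_val_zero, Matrix.cons_val_one]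
  generalize Real.sqrt (1 - u ^ 2) = v at hv ⊢
  calc
    _ = 2 * ((v ^ 2) ^ 2 + u ^ 4) ^ 2 + 4 * u ^ 2 * v ^ 2 * (v ^ 2 - u ^ 2) ^ 2 := by ring
    _ = _ := by rw [hv]; ring

theorem not_forall_marginal_eq_of_le_squareWeight (hu : 1 / 2 < u ^ 4) (hu1 : u ^ 2 < 1)
    {c : SquareConfig → ℝ} (hc : ∀ x, 0 ≤ c x) (hle : ∀ x, c x ≤ squareWeight u x) :
    ¬ ∀ p b, marginal c (squareIndex p) b = vco u b ^ 2 / 2 := by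
  intro hmarginal
  have duality : ∑ p, ∑ b, indexSign b * marginal c (squareIndex p) b ≤
      ∑ x, (excess x)⁺ * squareWeight u x :=
    sum_mul_marginal_le_sum_posPart_mul hc hle squareIndex fun _ ↦ indexSign
  simp only [hmarginal, sum_indexSign_mul_sq_vco hu1.le, Finset.sum_const, Finset.card_univ,
    Fintype.card_fin, nsmul_eq_mul, Nat.cast_ofNat,
    sum_posPart_excess_mul_squareWeight hu1.le] at duality
  have gap_neg : (1 - u ^ 2) ^ 2 * (1 - 2 * u ^ 4) < 0 :=
    mul_neg_of_pos_of_neg (pow_pos (sub_pos.2 hu1) 2) (by linarith)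
  linarith

theorem stmt_3_general (hu : 1 / 2 < u ^ 4) (hu1 : u ^ 2 < 1)
    {c : Fin 2 → Fin 2 → Fin 2 → Fin 2 → ℝ} (hc : ∀ i j k l, 0 ≤ c i j k l)
    (hle : ∀ i j k l, c i j k l ≤ (1 / 2) * (uco u i * uco u j * uco u k * uco u l
      + vco u i * vco u j * vco u k * vco u l) ^ 2)
    (h₁ : ∀ i, ∑ j, ∑ k, ∑ l, c i j k l = vco u i ^ 2 / 2)
    (h₂ : ∀ j, ∑ i, ∑ k, ∑ l, c i j k l = vco u j ^ 2 / 2)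
    (h₃ : ∀ k, ∑ i, ∑ j, ∑ l, c i j k l = vco u k ^ 2 / 2)
    (h₄ : ∀ l, ∑ i, ∑ j, ∑ k, c i j k l = vco u l ^ 2 / 2) : False := by
  refine not_forall_marginal_eq_of_le_squareWeight hu hu1
    (c := fun (i, j, k, l) ↦ c i j k l) (fun _ ↦ hc _ _ _ _) (fun _ ↦ hle _ _ _ _) fun p b ↦ ?_
  fin_cases p
  · simpa [marginal, squareIndex, Finset.sum_filter, Fintype.sum_prod_type] using h₁ b
  · simpa [marginal, squareIndex, Finset.sum_filter, Fintype.sum_prod_type] using h₂ b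
  · simpa [marginal, squareIndex, Finset.sum_filter, Fintype.sum_prod_type] using h₃ b
  · simpa [marginal, squareIndex, Finset.sum_filter, Fintype.sum_prod_type] using h₄ b

end SquareNetwork

/-- infeasibility of the square-network token-counting linear program.
The token direction `t ∈ {cw, acw}` is encoded by a `Bool`, `true` standing for `cw`
and `false` for `acw`. -/
theorem stmt_3 (u : ℝ) (hu : (0.841 : ℝ) < u) (hu1 : u < 1) :
    ¬ ∃ q : Fin 2 → Fin 2 → Fin 2 → Fin 2 → Bool → ℝ,
      (∀ i j k l t, 0 ≤ q i j k l t) ∧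
      (∀ i j k l, q i j k l true + q i j k l false =
        (1 / 2) * (uco u i * uco u j * uco u k * uco u l
                    + vco u i * vco u j * vco u k * vco u l) ^ 2) ∧
      (∀ i, (∑ j, ∑ k, ∑ l, q i j k l true) = (vco u i) ^ 2 / 2) ∧
      (∀ i, (∑ j, ∑ k, ∑ l, q i j k l false) = (uco u i) ^ 2 / 2) ∧
      (∀ j, (∑ i, ∑ k, ∑ l, q i j k l true) = (vco u j) ^ 2 / 2) ∧
      (∀ j, (∑ i, ∑ k, ∑ l, q i j k l false) = (uco u j) ^ 2 / 2) ∧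
      (∀ k, (∑ i, ∑ j, ∑ l, q i j k l true) = (vco u k) ^ 2 / 2) ∧
      (∀ k, (∑ i, ∑ j, ∑ l, q i j k l false) = (uco u k) ^ 2 / 2) ∧
      (∀ l, (∑ i, ∑ j, ∑ k, q i j k l true) = (vco u l) ^ 2 / 2) ∧
      (∀ l, (∑ i, ∑ j, ∑ k, q i j k l false) = (uco u l) ^ 2 / 2) := by
  rintro ⟨q, hq, hP, h₁, -, h₂, -, h₃, -, h₄, -⟩
  have hle (i j k l) := (le_add_of_nonneg_right (hq i j k l false)).trans (hP i j k l).le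
  have hu4 : 1 / 2 < u ^ 4 :=
    lt_trans (by norm_num) (pow_lt_pow_left₀ hu (by norm_num) four_ne_zero)
  exact stmt_3_general hu4 (by nlinarith) (hq · · · · true) hle h₁ h₂ h₃ h₄
end

section
/- Let a triangle-network distribution P(a,b,c) have outputs a ∈ {0} ∪ {1_i : i ∈ I_A} ∪ {2}, b ∈ {0} ∪ {1_j : j ∈ I_B} ∪ {2}, c ∈ {0} ∪ {1_k : k ∈ I_C} ∪ {2} (I_A, I_B, I_C finite), and suppose: (1) P admits a local model on the triangle network, with independent hidden variables α, β, γ and response kernels p_A(a|β,γ), p_B(b|α,γ), p_C(c|α,β); and (2) the coarse-grained distribution P̃ obtained by mapping every 1_i to 1 equals the single-token TC distribution with parameters (p_α,p_β,p_γ) ∈ (0,1)³. Then there exist probability distributions q(i,j,k|cw) and q(i,j,k|acw) on I_A×I_B×I_C such that: q(i|cw) = P(1_i,2,0)/P̃(1,2,0), q(j|cw) = P(0,1_j,2)/P̃(0,1,2), q(k|cw) = P(2,0,1_k)/P̃(2,0,1), q(i|acw) = P(1_i,0,2)/P̃(1,0,2), q(j|acw) = P(2,1_j,0)/P̃(2,1,0),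 q(k|acw) = P(0,2,1_k)/P̃(0,2,1) (where q(i|t), q(j|t), q(k|t) denote the single-index marginals of q(·|t)), and for all (i,j,k): p_α p_β p_γ · q(i,j,k|cw) + (1−p_α)(1−p_β)(1−p_γ) · q(i,j,k|acw) = P(1_i,1_j,1_k). -/
open MeasureTheory

inductive TOut (I : Type) where
  | zero : TOut I
  | one : I → TOut I
  | two : TOut I
  deriving DecidableEq

instance {I : Type} [Fintype I] [DecidableEq I] : Fintype (TOut I) where
  elems := insert TOut.zero (insert TOut.two (Finset.univ.image TOut.one))
  complete := by
    intro x
    cases x <;> simp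

/-- Weight of a Bernoulli(`p`) variable. -/
noncomputable def bern (p : ℝ) (t : Bool) : ℝ := if t then p else 1 - p

/-- Number of tokens received by a party: `s` tokens from one source plus `1 - t`
from the other. -/
def tokOut (s t : Bool) : ℕ := (if s then 1 else 0) + (if t then 0 else 1)

/-- The single-token token-counting distribution on the triangle with parameters
`(pα, pβ, pγ)`: the distribution of `(ã, b̃, c̃)` with `ã = tβ + (1 - tγ)`,
`b̃ = tγ + (1 - tα)`, `c̃ = tα + (1 - tβ)` for independent Bernoulli `tα, tβ, tγ`. -/
noncomputable def tcP (pα pβ pγ : ℝ) (x y z : ℕ) : ℝ :=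
  ∑ tα : Bool, ∑ tβ : Bool, ∑ tγ : Bool,
    bern pα tα * bern pβ tβ * bern pγ tγ *
      (if x = tokOut tβ tγ ∧ y = tokOut tγ tα ∧ z = tokOut tα tβ then 1 else 0)

/-- Coarse graining `0 ↦ 0`, `1_i ↦ 1`, `2 ↦ 2`. -/
def cg {I : Type} : TOut I → ℕ
  | TOut.zero => 0
  | TOut.one _ => 1
  | TOut.two => 2

/-- Coarse-grained version of a triangle distribution. -/
noncomputable def cgP {IA IB IC : Type} [Fintype IA] [DecidableEq IA] [Fintype IB] [DecidableEq IB]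
    [Fintype IC] [DecidableEq IC]
    (P : TOut IA → TOut IB → TOut IC → ℝ) (x y z : ℕ) : ℝ :=
  ∑ a, ∑ b, ∑ c, if cg a = x ∧ cg b = y ∧ cg c = z then P a b c else 0

/-!
The three counts always sum to `3`, and given the hidden variables the outcomes are independent, so
each count is almost surely a function of the two adjacent sources. The counts minus one then sum to
zero around the triangle, which makes them differences `y β - z γ`, `z γ - x α`, `x α - y β` of
functions of single sources. All these differences have absolute value at most one; as the counts
`(2, 0, 1)` and `(2, 1, 0)` both occur and the sources are independent, `x`, `y`, `z` take the same
two consecutive values, and hence are tokens up to a shift.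

The outcomes `(1_i, 1_j, 1_k)` arise exactly when the three tokens agree, and `q(·|cw)`, `q(·|acw)`
are the conditional laws of the indices for the two common values. For the marginals, flip the token
of `α`: the outcome of `A` does not notice, while the outcomes of `B` and `C` become `2` and `0` or
`0` and `2`.
-/

open Filter

section TokenCounting

variable {pα pβ pγ rα rβ rγ : ℝ}

lemma bern_pos {p : ℝ} (hp : p ∈ Set.Ioo (0 : ℝ) 1) (t : Bool) : 0 < bern p t := by
  cases t
  · simpa [bern] using hp.2
  · simpa [bern] using hp.1

/-- The numbers of tokens `(ã, b̃, c̃)` received by the three parties when the sources emit the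
tokens `s = (tα, tβ, tγ)`. -/
def tokCounts (s : Bool × Bool × Bool) : ℕ × ℕ × ℕ :=
  (tokOut s.2.1 s.2.2, tokOut s.2.2 s.1, tokOut s.1 s.2.1)

/-- The probability of the tokens `s = (tα, tβ, tγ)`. -/
noncomputable def tokProb (pα pβ pγ : ℝ) (s : Bool × Bool × Bool) : ℝ :=
  bern pα s.1 * bern pβ s.2.1 * bern pγ s.2.2

lemma tokProb_pos (hpα : pα ∈ Set.Ioo (0 : ℝ) 1) (hpβ : pβ ∈ Set.Ioo (0 : ℝ) 1)
    (hpγ : pγ ∈ Set.Ioo (0 : ℝ) 1) (s : Bool × Bool × Bool) : 0 < tokProb pα pβ pγ s :=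
  mul_pos (mul_pos (bern_pos hpα _) (bern_pos hpβ _)) (bern_pos hpγ _)

lemma tokProb_rotate (s : Bool × Bool × Bool) :
    tokProb pβ pγ pα (s.2.1, s.2.2, s.1) = tokProb pα pβ pγ s :=
  (mul_rotate _ _ _).symm

lemma tokCounts_diag (t : Bool) : tokCounts (t, t, t) = (1, 1, 1) := by decide +revert

lemma tokCounts_not_diag (t : Bool) :
    tokCounts (!t, t, t) = (1, tokOut t !t, tokOut (!t) t) := by decide +revert

lemma exists_eq_diag_of_tokCounts_eq {s : Bool × Bool × Bool} (h : tokCounts s = (1, 1, 1)) :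
    ∃ t, (t, t, t) = s := by decide +revert

lemma not_diag_ne_diag (t b : Bool) : (!t, t, t) ≠ (b, b, b) := by decide +revert

-- The two constant configurations share the counts `(1, 1, 1)`.
lemma eq_of_tokCounts_eq {s t : Bool × Bool × Bool} (hs : ∀ b, s ≠ (b, b, b))
    (h : tokCounts t = tokCounts s) : t = s := by
  decide +revert

lemma tcP_eq_sum (x y z : ℕ) :
    tcP pα pβ pγ x y z =
      ∑ s, if tokCounts s = (x, y, z) then tokProb pα pβ pγ s else 0 := by
  simp only [tcP, tokCounts, tokProb, Fintype.sum_prod_type, Prod.mk.injEq, mul_ite, mul_one,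
    mul_zero, eq_comm]

lemma tcP_of_tokCounts_eq {s : Bool × Bool × Bool} (hs : ∀ b, s ≠ (b, b, b)) {x y z : ℕ}
    (h : tokCounts s = (x, y, z)) : tcP pα pβ pγ x y z = tokProb pα pβ pγ s := by
  rw [tcP_eq_sum, Fintype.sum_eq_single s fun t ht => ?_, if_pos h]
  exact if_neg fun h' => ht (eq_of_tokCounts_eq hs (h'.trans h.symm))

lemma tcP_ne_zero (hpα : pα ∈ Set.Ioo (0 : ℝ) 1) (hpβ : pβ ∈ Set.Ioo (0 : ℝ) 1)
    (hpγ : pγ ∈ Set.Ioo (0 : ℝ) 1) {s : Bool × Bool × Bool} (hs : ∀ b, s ≠ (b, b, b)) {x y z : ℕ}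
    (h : tokCounts s = (x, y, z)) : tcP pα pβ pγ x y z ≠ 0 :=
  (tcP_of_tokCounts_eq hs h).trans_ne (tokProb_pos hpα hpβ hpγ s).ne'

lemma tcP_eq_zero_of_add_ne {x y z : ℕ} (h : x + y + z ≠ 3) : tcP pα pβ pγ x y z = 0 := by
  have hsum (s) : (tokCounts s).1 + (tokCounts s).2.1 + (tokCounts s).2.2 = 3 := by
    decide +revert
  rw [tcP_eq_sum]
  refine Finset.sum_eq_zero fun s _ => if_neg fun hs => h ?_
  simpa only [hs] using hsum s

lemma eq_of_bern_mul_eq {r p R K : ℝ} (hK : K ≠ 0) (h : ∀ t, bern r t * R = bern p t * K) :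
    r = p := by
  have h₁ : r * R = p * K := h true
  have h₀ : (1 - r) * R = (1 - p) * K := h false
  exact mul_right_cancel₀ hK (by linear_combination h₁ - r * (h₁ + h₀))

lemma tcP_injective (hpα : pα ∈ Set.Ioo (0 : ℝ) 1) (hpβ : pβ ∈ Set.Ioo (0 : ℝ) 1)
    (hpγ : pγ ∈ Set.Ioo (0 : ℝ) 1)
    (h : ∀ x y z : ℕ, tcP rα rβ rγ x y z = tcP pα pβ pγ x y z) :
    rα = pα ∧ rβ = pβ ∧ rγ = pγ := by
  have hprob (s : Bool × Bool × Bool) (hs : ∀ b, s ≠ (b, b, b)) :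
      tokProb rα rβ rγ s = tokProb pα pβ pγ s := by
    rw [← tcP_of_tokCounts_eq hs rfl, h, tcP_of_tokCounts_eq hs rfl]
  have hK {p q : ℝ} (hp : p ∈ Set.Ioo (0 : ℝ) 1) (hq : q ∈ Set.Ioo (0 : ℝ) 1) :
      bern p true * bern q false ≠ 0 :=
    (mul_pos (bern_pos hp _) (bern_pos hq _)).ne'
  simp only [tokProb] at hprob
  exact ⟨eq_of_bern_mul_eq (R := bern rβ true * bern rγ false) (hK hpβ hpγ) fun t => by
      linear_combination hprob (t, true, false) (by decide +revert),
    eq_of_bern_mul_eq (R := bern rα true * bern rγ false) (hK hpα hpγ) fun t => by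
      linear_combination hprob (true, t, false) (by decide +revert),
    eq_of_bern_mul_eq (R := bern rα true * bern rβ false) (hK hpα hpβ) fun t => by
      linear_combination hprob (true, false, t) (by decide +revert)⟩

end TokenCounting

section IndependentVariables

variable {Λα Λβ Λγ : Type*} [MeasurableSpace Λα] [MeasurableSpace Λβ] [MeasurableSpace Λγ]
  {μα : Measure Λα} {μβ : Measure Λβ} {μγ : Measure Λγ}

lemma frequently_prod_mk [SFinite μβ] {p : Λα → Prop} {q : Λβ → Prop}
    (hp : ∃ᵐ x ∂μα, p x) (hq : ∃ᵐ y ∂μβ, q y) : ∃ᵐ ω ∂μα.prod μβ, p ω.1 ∧ q ω.2 := fun h => by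
  obtain ⟨x, hpx, hx⟩ := (hp.and_eventually (Measure.ae_ae_of_ae_prod h)).exists
  obtain ⟨y, hqy, hy⟩ := (hq.and_eventually hx).exists
  exact hy ⟨hpx, hqy⟩

lemma ae_frequently_eq {E : Type*} [Countable E] (f : Λα → E) :
    ∀ᵐ x ∂μα, ∃ᵐ x' ∂μα, f x' = f x := by
  have h (e : E) : ∀ᵐ x ∂μα, f x = e → ∃ᵐ x' ∂μα, f x' = e := by
    by_cases he : ∃ᵐ x ∂μα, f x = e
    · exact ae_of_all _ fun _ _ => he
    · exact (not_frequently.1 he).mono fun x hx hxe => absurd hxe hx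
  filter_upwards [ae_all_iff.2 h] with x hx using hx _ rfl

lemma integral_prod_prod [SFinite μα] [SFinite μβ] [SFinite μγ] {f : Λα × Λβ × Λγ → ℝ}
    (hf : Integrable f (μα.prod (μβ.prod μγ))) :
    ∫ ω, f ω ∂μα.prod (μβ.prod μγ) = ∫ x, ∫ y, ∫ z, f (x, y, z) ∂μγ ∂μβ ∂μα := by
  rw [integral_prod _ hf]
  refine integral_congr_ae ?_
  filter_upwards [hf.prod_right_ae] with x hx using integral_prod _ hx

lemma sum_sum_integral {Ω ι κ : Type*} [MeasurableSpace Ω] {μ : Measure Ω} [Fintype ι]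
    [Fintype κ] {F : ι → κ → Ω → ℝ} (hF : ∀ i j, Integrable (F i j) μ) :
    ∑ i, ∑ j, ∫ ω, F i j ω ∂μ = ∫ ω, ∑ i, ∑ j, F i j ω ∂μ := by
  rw [integral_finsetSum _ fun i _ => integrable_finsetSum _ fun j _ => hF i j]
  exact Finset.sum_congr rfl fun i _ => (integral_finsetSum _ fun j _ => hF i j).symm

lemma integral_eq_sum_fiber {Ω ι : Type*} [MeasurableSpace Ω] {μ : Measure Ω} [Fintype ι]
    [MeasurableSpace ι] [MeasurableSingletonClass ι] {T : Ω → ι} (hT : Measurable T) {f : Ω → ℝ}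
    (hf : Integrable f μ) : ∫ ω, f ω ∂μ = ∑ i, ∫ ω in T ⁻¹' {i}, f ω ∂μ := by
  rw [← integral_iUnion_fintype (fun i => hT (measurableSet_singleton i))
    (fun i j hij => (Set.disjoint_singleton.2 hij).preimage T) (fun i => hf.integrableOn),
    ← Set.preimage_iUnion, Set.iUnion_of_singleton, Set.preimage_univ, setIntegral_univ]

lemma measurePreserving_rotate [SFinite μα] [SFinite μβ] [SFinite μγ] :
    MeasurePreserving (fun ω : Λα × Λβ × Λγ => (ω.2.1, ω.2.2, ω.1))
      (μα.prod (μβ.prod μγ)) (μβ.prod (μγ.prod μα)) :=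
  (measurePreserving_prodAssoc μβ μγ μα).comp Measure.measurePreserving_swap

lemma measurableEmbedding_rotate :
    MeasurableEmbedding fun ω : Λα × Λβ × Λγ => (ω.2.1, ω.2.2, ω.1) :=
  (MeasurableEquiv.prodComm.trans MeasurableEquiv.prodAssoc).measurableEmbedding

lemma ae_rotate [SFinite μα] [SFinite μβ] [SFinite μγ] {p : Λα × Λβ × Λγ → Prop}
    (h : ∀ᵐ ω ∂μα.prod (μβ.prod μγ), p ω) :
    ∀ᵐ ω ∂μβ.prod (μγ.prod μα), p (ω.2.2, ω.1, ω.2.1) :=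
  (measurePreserving_rotate.comp measurePreserving_rotate).quasiMeasurePreserving.ae h

lemma measureReal_preimage_singleton [IsProbabilityMeasure μα] {t : Λα → Bool}
    (ht : Measurable t) (b : Bool) : μα.real (t ⁻¹' {b}) = bern (μα.real (t ⁻¹' {true})) b := by
  cases b
  · rw [bern, if_neg Bool.false_ne_true,
      ← probReal_compl_eq_one_sub (ht (measurableSet_singleton _)), ← Set.preimage_compl,
      Bool.compl_singleton, Bool.not_true]
  · exact (if_pos rfl).symm

-- Freezing `α` at a generic value splits `a`; freezing `γ` at a generic value then splits `c`.
lemma exists_ae_eq_sub_of_add_eq_zero {G : Type*} [AddCommGroup G] [MeasurableSpace G]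
    [MeasurableSub G] [NeZero μα] [NeZero μγ] [SFinite μα] [SFinite μβ] [SFinite μγ]
    {a : Λβ → Λγ → G} {b : Λγ → Λα → G} {c : Λα → Λβ → G}
    (hb : Measurable fun q : Λγ × Λα => b q.1 q.2) (hc : Measurable fun q : Λα × Λβ => c q.1 q.2)
    (h : ∀ᵐ ω ∂μα.prod (μβ.prod μγ), a ω.2.1 ω.2.2 + b ω.2.2 ω.1 + c ω.1 ω.2.1 = 0) :
    ∃ (x : Λα → G) (y : Λβ → G) (z : Λγ → G), Measurable x ∧ Measurable y ∧ Measurable z ∧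
      ∀ᵐ ω ∂μα.prod (μβ.prod μγ), a ω.2.1 ω.2.2 = y ω.2.1 - z ω.2.2 ∧
        b ω.2.2 ω.1 = z ω.2.2 - x ω.1 ∧ c ω.1 ω.2.1 = x ω.1 - y ω.2.1 := by
  obtain ⟨α₀, hα₀⟩ := (Measure.ae_ae_of_ae_prod h).exists
  have ha : ∀ᵐ ω ∂μα.prod (μβ.prod μγ), a ω.2.1 ω.2.2 = 0 - c α₀ ω.2.1 - b ω.2.2 α₀ := by
    filter_upwards [Measure.quasiMeasurePreserving_snd.ae hα₀] with ω hω
    rw [← hω]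
    abel
  obtain ⟨γ₀, hγ₀⟩ := (Measure.ae_ae_of_ae_prod (ae_rotate (ae_rotate (h.and ha)))).exists
  have hc' : ∀ᵐ ω ∂μα.prod (μβ.prod μγ),
      c ω.1 ω.2.1 = b γ₀ α₀ - b γ₀ ω.1 - (0 - c α₀ ω.2.1) := by
    filter_upwards [ae_rotate (Measure.quasiMeasurePreserving_snd (μ := μγ).ae hγ₀)]
      with ω ⟨hsum, hsub⟩
    rw [hsub] at hsum
    refine sub_eq_zero.1 (Eq.trans ?_ hsum)
    abel
  refine ⟨fun α => b γ₀ α₀ - b γ₀ α, fun β => 0 - c α₀ β, fun γ => b γ α₀,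
    (hb.comp measurable_prodMk_left).const_sub _, (hc.comp measurable_prodMk_left).const_sub _,
    hb.comp measurable_prodMk_right, ?_⟩
  filter_upwards [h, ha, hc'] with ω hsum hsuba hsubc
  refine ⟨hsuba, ?_, hsubc⟩
  rw [hsuba, hsubc] at hsum
  refine sub_eq_zero.1 (Eq.trans ?_ hsum)
  abel

-- By independence, all combinations of values of positive probability occur together.
lemma exists_ae_eq_or_eq_add_one [SFinite μα] [SFinite μβ] [SFinite μγ]
    {x : Λα → ℤ} {y : Λβ → ℤ} {z : Λγ → ℤ}
    (hsub : ∀ᵐ ω ∂μα.prod (μβ.prod μγ), y ω.2.1 - z ω.2.2 ∈ Set.Icc (-1) 1 ∧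
      z ω.2.2 - x ω.1 ∈ Set.Icc (-1) 1 ∧ x ω.1 - y ω.2.1 ∈ Set.Icc (-1) 1)
    (hxy : ∃ᵐ ω ∂μα.prod (μβ.prod μγ), x ω.1 = z ω.2.2 + 1 ∧ y ω.2.1 = z ω.2.2 + 1)
    (hxz : ∃ᵐ ω ∂μα.prod (μβ.prod μγ), x ω.1 = z ω.2.2 ∧ y ω.2.1 = z ω.2.2 + 1) :
    ∃ m : ℤ, ∀ᵐ ω ∂μα.prod (μβ.prod μγ), (x ω.1 = m ∨ x ω.1 = m + 1) ∧
      (y ω.2.1 = m ∨ y ω.2.1 = m + 1) ∧ (z ω.2.2 = m ∨ z ω.2.2 = m + 1) := by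
  have hcomb {i j k : ℤ} (hi : ∃ᵐ α ∂μα, x α = i) (hj : ∃ᵐ β ∂μβ, y β = j)
      (hk : ∃ᵐ γ ∂μγ, z γ = k) :
      (-1 ≤ j - k ∧ j - k ≤ 1) ∧ (-1 ≤ k - i ∧ k - i ≤ 1) ∧ -1 ≤ i - j ∧ i - j ≤ 1 := by
    obtain ⟨ω, ⟨rfl, rfl, rfl⟩, hω⟩ :=
      ((frequently_prod_mk hi (frequently_prod_mk hj hk)).and_eventually hsub).exists
    exact hω
  have hval : ∀ᵐ ω ∂μα.prod (μβ.prod μγ), (∃ᵐ α ∂μα, x α = x ω.1) ∧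
      (∃ᵐ β ∂μβ, y β = y ω.2.1) ∧ ∃ᵐ γ ∂μγ, z γ = z ω.2.2 :=
    (Measure.quasiMeasurePreserving_fst.ae (ae_frequently_eq x)).and <|
      Measure.quasiMeasurePreserving_snd.ae <|
        (Measure.quasiMeasurePreserving_fst.ae (ae_frequently_eq y)).and
          (Measure.quasiMeasurePreserving_snd.ae (ae_frequently_eq z))
  obtain ⟨ω₁, ⟨hx₁, hy₁⟩, hX₁, hY₁, hZ₁⟩ := (hxy.and_eventually hval).exists
  obtain ⟨ω₂, ⟨hx₂, hy₂⟩, hX₂, hY₂, hZ₂⟩ := (hxz.and_eventually hval).exists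
  have hm : z ω₂.2.2 = z ω₁.2.2 := by
    have h₁₂ := (hcomb hX₁ hY₁ hZ₂).2.1
    have h₂₁ := (hcomb hX₁ hY₂ hZ₁).1
    omega
  refine ⟨z ω₁.2.2, hval.mono fun ω ⟨hX, hY, hZ⟩ => ⟨?_, ?_, ?_⟩⟩
  · have h := hcomb hX hY₁ hZ₁
    omega
  · have h₁ := (hcomb hX₁ hY hZ₁).1
    have h₂ := (hcomb hX₁ hY hZ₁).2.2
    omega
  · have h₁ := (hcomb hX₁ hY₁ hZ).1
    have h₂ := (hcomb hX₂ hY₁ hZ).2.1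
    omega

lemma exists_tokens_of_add_eq_three [NeZero μα] [NeZero μγ] [SFinite μα] [SFinite μβ] [SFinite μγ]
    {a : Λβ → Λγ → ℤ} {b : Λγ → Λα → ℤ} {c : Λα → Λβ → ℤ}
    (hb : Measurable fun q : Λγ × Λα => b q.1 q.2) (hc : Measurable fun q : Λα × Λβ => c q.1 q.2)
    (hsum : ∀ᵐ ω ∂μα.prod (μβ.prod μγ), a ω.2.1 ω.2.2 + b ω.2.2 ω.1 + c ω.1 ω.2.1 = 3)
    (hmem : ∀ᵐ ω ∂μα.prod (μβ.prod μγ), a ω.2.1 ω.2.2 ∈ Set.Icc 0 2 ∧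
      b ω.2.2 ω.1 ∈ Set.Icc 0 2 ∧ c ω.1 ω.2.1 ∈ Set.Icc 0 2)
    (h201 : ∃ᵐ ω ∂μα.prod (μβ.prod μγ), a ω.2.1 ω.2.2 = 2 ∧ b ω.2.2 ω.1 = 0)
    (h210 : ∃ᵐ ω ∂μα.prod (μβ.prod μγ), a ω.2.1 ω.2.2 = 2 ∧ b ω.2.2 ω.1 = 1) :
    ∃ (tα : Λα → Bool) (tβ : Λβ → Bool) (tγ : Λγ → Bool),
      Measurable tα ∧ Measurable tβ ∧ Measurable tγ ∧
      ∀ᵐ ω ∂μα.prod (μβ.prod μγ), a ω.2.1 ω.2.2 = tokOut (tβ ω.2.1) (tγ ω.2.2) ∧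
        b ω.2.2 ω.1 = tokOut (tγ ω.2.2) (tα ω.1) ∧ c ω.1 ω.2.1 = tokOut (tα ω.1) (tβ ω.2.1) := by
  obtain ⟨x, y, z, hx, hy, hz, hsub⟩ := exists_ae_eq_sub_of_add_eq_zero
    (a := fun β γ => a β γ - 1) (b := fun γ α => b γ α - 1) (c := fun α β => c α β - 1)
    (hb.sub_const 1) (hc.sub_const 1) (hsum.mono fun ω hω => by omega)
  obtain ⟨m, hm⟩ := exists_ae_eq_or_eq_add_one (x := x) (y := y) (z := z)
    ((hsub.and hmem).mono fun ω ⟨h, ha, hb, hc⟩ => by simp only [Set.mem_Icc] at *; omega)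
    ((h201.and_eventually hsub).mono fun ω h => by omega)
    ((h210.and_eventually hsub).mono fun ω h => by omega)
  have hdecide : Measurable fun n : ℤ => decide (n = m + 1) := measurable_of_countable _
  refine ⟨fun α => decide (x α = m + 1), fun β => decide (y β = m + 1),
    fun γ => decide (z γ = m + 1), hdecide.comp hx, hdecide.comp hy, hdecide.comp hz, ?_⟩
  filter_upwards [hsub, hm] with ω ⟨ha, hb, hc⟩ ⟨hxω, hyω, hzω⟩
  simp only [tokOut, decide_eq_true_eq]
  refine ⟨?_, ?_, ?_⟩ <;> split_ifs <;> push_cast <;> omega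

end IndependentVariables

section MeanCount

variable {I J K : Type} [Fintype I] [DecidableEq I] [Fintype J] [DecidableEq J]
  [Fintype K] [DecidableEq K]

/-- The mean token count of an output distribution `f`, rounded down so as to be an integer; it is
the actual count if `f` determines the count. -/
noncomputable def meanCount (f : TOut I → ℝ) : ℤ := ⌊∑ a, f a * cg a⌋

lemma measurable_meanCount : Measurable (meanCount : (TOut I → ℝ) → ℤ) :=
  Int.measurable_floor.comp (by fun_prop)

lemma meanCount_eq {f : TOut I → ℝ} (hf : f ∈ stdSimplex ℝ (TOut I)) {n : ℤ}
    (h : ∀ a, f a ≠ 0 → (cg a : ℤ) = n) : meanCount f = n := by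
  have hmul (a) : f a * cg a = f a * n := by
    rcases eq_or_ne (f a) 0 with ha | ha
    · simp only [ha, zero_mul]
    · rw [← h a ha, Int.cast_natCast]
  rw [meanCount, Finset.sum_congr rfl fun a _ => hmul a, ← Finset.sum_mul, hf.2, one_mul,
    Int.floor_intCast]

lemma exists_ne_zero_of_mem_stdSimplex {X : Type*} [Fintype X] {f : X → ℝ}
    (hf : f ∈ stdSimplex ℝ X) : ∃ a, f a ≠ 0 := by
  obtain ⟨a, -, ha⟩ := Finset.exists_ne_zero_of_sum_ne_zero (hf.2.trans_ne one_ne_zero)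
  exact ⟨a, ha⟩

lemma cg_eq_meanCount {f : TOut I → ℝ} {g : TOut J → ℝ} {h : TOut K → ℝ}
    (hf : f ∈ stdSimplex ℝ (TOut I)) (hg : g ∈ stdSimplex ℝ (TOut J))
    (hh : h ∈ stdSimplex ℝ (TOut K)) {n : ℕ}
    (hsum : ∀ a b c, f a * g b * h c ≠ 0 → cg a + cg b + cg c = n) {a : TOut I} (ha : f a ≠ 0) :
    (cg a : ℤ) = meanCount f := by
  obtain ⟨b, hb⟩ := exists_ne_zero_of_mem_stdSimplex hg
  obtain ⟨c, hc⟩ := exists_ne_zero_of_mem_stdSimplex hh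
  refine (meanCount_eq hf fun a' ha' => ?_).symm
  have h₁ := hsum a b c (mul_ne_zero (mul_ne_zero ha hb) hc)
  have h₂ := hsum a' b c (mul_ne_zero (mul_ne_zero ha' hb) hc)
  omega

end MeanCount

section CoarseGraining

variable {I J K : Type}

lemma cg_mem_Icc (a : TOut I) : (cg a : ℤ) ∈ Set.Icc 0 2 := by
  cases a <;> simp [cg]

lemma exists_eq_one_of_cg_eq_one {a : TOut I} (h : cg a = 1) : ∃ i, a = .one i := by
  cases a <;> simp_all [cg]

/-- The outcome `0` or `2` that a party reports if its two sources agree on which neighbour gets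
their token: with `t = true` it gets both tokens, with `t = false` none. -/
def TOut.extremal (t : Bool) : TOut I := bif t then .two else .zero

lemma cg_eq_tokOut_not_iff {a : TOut I} {t : Bool} : cg a = tokOut t (!t) ↔ a = .extremal t := by
  cases a <;> cases t <;> simp [cg, tokOut, TOut.extremal]

variable [Fintype I] [DecidableEq I] [Fintype J] [DecidableEq J] [Fintype K] [DecidableEq K]
  {P : TOut I → TOut J → TOut K → ℝ}

lemma sum_eq_sum_one {f : TOut I → ℝ} (h : ∀ a, cg a ≠ 1 → f a = 0) :
    ∑ a, f a = ∑ i, f (.one i) := by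
  refine (Fintype.sum_of_injective TOut.one (fun _ _ => TOut.one.inj) _ _ (fun a ha => ?_)
    fun _ => rfl).symm
  exact h a fun h1 => ha ((exists_eq_one_of_cg_eq_one h1).imp fun _ => Eq.symm)

lemma cgP_rotate (x y z : ℕ) : cgP (fun b c a => P a b c) y z x = cgP P x y z := by
  rw [cgP, Finset.sum_comm_cycle]
  exact Fintype.sum_congr _ _ fun a => Fintype.sum_congr _ _ fun b => Fintype.sum_congr _ _
    fun c => if_congr and_rotate.symm rfl rfl

lemma eq_zero_of_cgP_eq_zero (hP : ∀ a b c, 0 ≤ P a b c) {a : TOut I} {b : TOut J} {c : TOut K}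
    (h : cgP P (cg a) (cg b) (cg c) = 0) : P a b c = 0 := by
  have hnonneg (s : TOut I × TOut J × TOut K) :
      0 ≤ if cg s.1 = cg a ∧ cg s.2.1 = cg b ∧ cg s.2.2 = cg c then P s.1 s.2.1 s.2.2 else 0 := by
    split_ifs
    exacts [hP _ _ _, le_rfl]
  simp only [cgP, ← Fintype.sum_prod_type'] at h
  simpa using congrFun ((Fintype.sum_eq_zero_iff_of_nonneg hnonneg).1 h) (a, b, c)

end CoarseGraining

/-- A local model on the triangle network with outcome types `A`, `B`, `C`. The arguments of the
response functions are in cyclic order, so that the three parties play the same role. -/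
structure TriangleModel (A B C Λα Λβ Λγ : Type*) [Fintype A] [Fintype B] [Fintype C]
    [MeasurableSpace Λα] [MeasurableSpace Λβ] [MeasurableSpace Λγ] where
  μα : Measure Λα
  μβ : Measure Λβ
  μγ : Measure Λγ
  [isProbabilityMeasure_μα : IsProbabilityMeasure μα]
  [isProbabilityMeasure_μβ : IsProbabilityMeasure μβ]
  [isProbabilityMeasure_μγ : IsProbabilityMeasure μγ]
  pA : A → Λβ → Λγ → ℝ
  pB : B → Λγ → Λα → ℝ
  pC : C → Λα → Λβ → ℝ
  measurable_pA (a : A) : Measurable fun q : Λβ × Λγ => pA a q.1 q.2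
  measurable_pB (b : B) : Measurable fun q : Λγ × Λα => pB b q.1 q.2
  measurable_pC (c : C) : Measurable fun q : Λα × Λβ => pC c q.1 q.2
  pA_mem (β : Λβ) (γ : Λγ) : (pA · β γ) ∈ stdSimplex ℝ A
  pB_mem (γ : Λγ) (α : Λα) : (pB · γ α) ∈ stdSimplex ℝ B
  pC_mem (α : Λα) (β : Λβ) : (pC · α β) ∈ stdSimplex ℝ C

namespace TriangleModel

attribute [instance] isProbabilityMeasure_μα isProbabilityMeasure_μβ isProbabilityMeasure_μγ

section JointDistribution

variable {A B C Λα Λβ Λγ : Type*} [Fintype A] [Fintype B] [Fintype C]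
  [MeasurableSpace Λα] [MeasurableSpace Λβ] [MeasurableSpace Λγ]
  (M : TriangleModel A B C Λα Λβ Λγ)

/-- The same model with the parties renamed cyclically, `B` playing the role of `A`. -/
def rotate : TriangleModel B C A Λβ Λγ Λα where
  μα := M.μβ
  μβ := M.μγ
  μγ := M.μα
  pA := M.pB
  pB := M.pC
  pC := M.pA
  measurable_pA := M.measurable_pB
  measurable_pB := M.measurable_pC
  measurable_pC := M.measurable_pA
  pA_mem := M.pB_mem
  pB_mem := M.pC_mem
  pC_mem := M.pA_mem

/-- The joint law of the hidden variables `ω = (α, β, γ)`. -/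
noncomputable def μ : Measure (Λα × Λβ × Λγ) := M.μα.prod (M.μβ.prod M.μγ)

instance : IsProbabilityMeasure M.μ :=
  inferInstanceAs (IsProbabilityMeasure (M.μα.prod (M.μβ.prod M.μγ)))

/-- The probability of the outcomes `a, b, c` given the hidden variables `ω = (α, β, γ)`. -/
def joint (a : A) (b : B) (c : C) (ω : Λα × Λβ × Λγ) : ℝ :=
  M.pA a ω.2.1 ω.2.2 * M.pB b ω.2.2 ω.1 * M.pC c ω.1 ω.2.1

/-- The distribution of the outcomes. -/
noncomputable def dist (a : A) (b : B) (c : C) : ℝ := ∫ ω, M.joint a b c ω ∂M.μ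

lemma measurable_joint (a : A) (b : B) (c : C) : Measurable (M.joint a b c) :=
  (((M.measurable_pA a).comp (by fun_prop : Measurable fun ω : Λα × Λβ × Λγ => (ω.2.1, ω.2.2))).mul
    ((M.measurable_pB b).comp (by fun_prop : Measurable fun ω : Λα × Λβ × Λγ => (ω.2.2, ω.1)))).mul
    ((M.measurable_pC c).comp (by fun_prop : Measurable fun ω : Λα × Λβ × Λγ => (ω.1, ω.2.1)))

lemma joint_mem_Icc (a : A) (b : B) (c : C) (ω : Λα × Λβ × Λγ) :
    M.joint a b c ω ∈ Set.Icc (0 : ℝ) 1 :=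
  unitInterval.mul_mem (unitInterval.mul_mem (mem_Icc_of_mem_stdSimplex (M.pA_mem _ _) a)
    (mem_Icc_of_mem_stdSimplex (M.pB_mem _ _) b)) (mem_Icc_of_mem_stdSimplex (M.pC_mem _ _) c)

lemma joint_nonneg (a : A) (b : B) (c : C) (ω : Λα × Λβ × Λγ) : 0 ≤ M.joint a b c ω :=
  (M.joint_mem_Icc a b c ω).1

lemma integrable_joint (a : A) (b : B) (c : C) : Integrable (M.joint a b c) M.μ :=
  .of_mem_Icc 0 1 (M.measurable_joint a b c).aemeasurable (ae_of_all _ (M.joint_mem_Icc a b c))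

lemma sum_sum_joint (a : A) (ω : Λα × Λβ × Λγ) :
    ∑ b, ∑ c, M.joint a b c ω = M.pA a ω.2.1 ω.2.2 := by
  simp only [joint, ← Finset.mul_sum, (M.pB_mem _ _).2, (M.pC_mem _ _).2, mul_one]

lemma exists_joint_ne_zero (ω : Λα × Λβ × Λγ) : ∃ a b c, M.joint a b c ω ≠ 0 := by
  obtain ⟨a, ha⟩ := exists_ne_zero_of_mem_stdSimplex (M.pA_mem ω.2.1 ω.2.2)
  obtain ⟨b, hb⟩ := exists_ne_zero_of_mem_stdSimplex (M.pB_mem ω.2.2 ω.1)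
  obtain ⟨c, hc⟩ := exists_ne_zero_of_mem_stdSimplex (M.pC_mem ω.1 ω.2.1)
  exact ⟨a, b, c, mul_ne_zero (mul_ne_zero ha hb) hc⟩

lemma dist_nonneg (a : A) (b : B) (c : C) : 0 ≤ M.dist a b c :=
  integral_nonneg (M.joint_nonneg a b c)

lemma dist_eq_integral (a : A) (b : B) (c : C) : M.dist a b c =
    ∫ α, ∫ β, ∫ γ, M.pA a β γ * M.pB b γ α * M.pC c α β ∂M.μγ ∂M.μβ ∂M.μα :=
  integral_prod_prod (M.integrable_joint a b c)

lemma dist_eq_zero_iff {a : A} {b : B} {c : C} :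
    M.dist a b c = 0 ↔ ∀ᵐ ω ∂M.μ, M.joint a b c ω = 0 :=
  integral_eq_zero_iff_of_nonneg (M.joint_nonneg a b c) (M.integrable_joint a b c)

lemma joint_rotate (a : A) (b : B) (c : C) (ω : Λα × Λβ × Λγ) :
    M.rotate.joint b c a (ω.2.1, ω.2.2, ω.1) = M.joint a b c ω := by
  simp only [joint, rotate]
  ring

lemma measurePreserving_rotate_μ :
    MeasurePreserving (fun ω : Λα × Λβ × Λγ => (ω.2.1, ω.2.2, ω.1)) M.μ M.rotate.μ :=
  measurePreserving_rotate

lemma dist_rotate : M.rotate.dist = fun b c a => M.dist a b c := by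
  funext b c a
  rw [dist, ← M.measurePreserving_rotate_μ.integral_comp measurableEmbedding_rotate]
  simp only [M.joint_rotate, dist]

end JointDistribution

section Determinism

variable {I J K : Type} [Fintype I] [DecidableEq I] [Fintype J] [DecidableEq J]
  [Fintype K] [DecidableEq K] {Λα Λβ Λγ : Type*}
  [MeasurableSpace Λα] [MeasurableSpace Λβ] [MeasurableSpace Λγ]
  {M : TriangleModel (TOut I) (TOut J) (TOut K) Λα Λβ Λγ}

lemma ae_add_eq_three (h : ∀ x y z, x + y + z ≠ 3 → cgP M.dist x y z = 0) :
    ∀ᵐ ω ∂M.μ, ∀ a b c, M.joint a b c ω ≠ 0 → cg a + cg b + cg c = 3 := by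
  simp only [ae_all_iff]
  intro a b c
  by_cases hsum : cg a + cg b + cg c = 3
  · exact ae_of_all _ fun _ _ => hsum
  · filter_upwards [M.dist_eq_zero_iff.1 (eq_zero_of_cgP_eq_zero M.dist_nonneg (h _ _ _ hsum))]
      with ω hω hne using absurd hω hne

lemma frequently_joint_ne_zero {x y z : ℕ} (h : cgP M.dist x y z ≠ 0) :
    ∃ᵐ ω ∂M.μ, ∃ a b c, M.joint a b c ω ≠ 0 ∧ cg a = x ∧ cg b = y ∧ cg c = z := fun hω => by
  refine h (Finset.sum_eq_zero fun a _ => Finset.sum_eq_zero fun b _ =>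
    Finset.sum_eq_zero fun c _ => ite_eq_right_iff.2 fun habc => M.dist_eq_zero_iff.2 ?_)
  filter_upwards [hω] with ω hω
  by_contra hne
  exact hω ⟨a, b, c, hne, habc⟩

lemma ae_cg_eq_meanCount (h : ∀ x y z, x + y + z ≠ 3 → cgP M.dist x y z = 0) :
    ∀ᵐ ω ∂M.μ, ∀ a b c, M.joint a b c ω ≠ 0 → (cg a : ℤ) = meanCount (M.pA · ω.2.1 ω.2.2) ∧
      (cg b : ℤ) = meanCount (M.pB · ω.2.2 ω.1) ∧ (cg c : ℤ) = meanCount (M.pC · ω.1 ω.2.1) := by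
  filter_upwards [ae_add_eq_three h] with ω hω a b c hne
  have hA := M.pA_mem ω.2.1 ω.2.2
  have hB := M.pB_mem ω.2.2 ω.1
  have hC := M.pC_mem ω.1 ω.2.1
  have hne' := mul_ne_zero_iff.1 hne
  refine ⟨cg_eq_meanCount hA hB hC hω (mul_ne_zero_iff.1 hne'.1).1,
    cg_eq_meanCount (n := 3) hB hC hA (fun b c a h' => ?_) (mul_ne_zero_iff.1 hne'.1).2,
    cg_eq_meanCount (n := 3) hC hA hB (fun c a b h' => ?_) hne'.2⟩
  · rw [← hω a b c (by rwa [TriangleModel.joint, mul_assoc, mul_comm])]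
    ring
  · rw [← hω a b c (by rwa [TriangleModel.joint, mul_comm, ← mul_assoc])]
    ring

end Determinism

end TriangleModel

/-- A token interpretation of a triangle model: each source emits a token `true` or `false` that
determines to which of its two neighbours the token goes, and the coarse-grained outcomes almost
surely count the tokens received. -/
structure TokenStrategy {I J K : Type} [Fintype I] [DecidableEq I] [Fintype J] [DecidableEq J]
    [Fintype K] [DecidableEq K] {Λα Λβ Λγ : Type*}
    [MeasurableSpace Λα] [MeasurableSpace Λβ] [MeasurableSpace Λγ]
    (M : TriangleModel (TOut I) (TOut J) (TOut K) Λα Λβ Λγ) where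
  tα : Λα → Bool
  tβ : Λβ → Bool
  tγ : Λγ → Bool
  measurable_tα : Measurable tα
  measurable_tβ : Measurable tβ
  measurable_tγ : Measurable tγ
  tokCounts_eq : ∀ᵐ ω ∂M.μ, ∀ a b c, M.joint a b c ω ≠ 0 →
    tokCounts (tα ω.1, tβ ω.2.1, tγ ω.2.2) = (cg a, cg b, cg c)

section TokenStrategies

variable {I J K : Type} [Fintype I] [DecidableEq I] [Fintype J] [DecidableEq J]
  [Fintype K] [DecidableEq K] {Λα Λβ Λγ : Type*}
  [MeasurableSpace Λα] [MeasurableSpace Λβ] [MeasurableSpace Λγ]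
  {M : TriangleModel (TOut I) (TOut J) (TOut K) Λα Λβ Λγ}

namespace TriangleModel

theorem nonempty_tokenStrategy (h : ∀ x y z, x + y + z ≠ 3 → cgP M.dist x y z = 0)
    (h201 : cgP M.dist 2 0 1 ≠ 0) (h210 : cgP M.dist 2 1 0 ≠ 0) : Nonempty (TokenStrategy M) := by
  have hmean := ae_cg_eq_meanCount h
  have hfreq {x y z : ℕ} (hxyz : cgP M.dist x y z ≠ 0) :
      ∃ᵐ ω ∂M.μ, meanCount (M.pA · ω.2.1 ω.2.2) = x ∧ meanCount (M.pB · ω.2.2 ω.1) = y := by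
    refine ((frequently_joint_ne_zero hxyz).and_eventually hmean).mono ?_
    rintro ω ⟨⟨a, b, c, hne, rfl, rfl, rfl⟩, hω⟩
    exact ⟨(hω a b c hne).1.symm, (hω a b c hne).2.1.symm⟩
  have hcounts : ∀ᵐ ω ∂M.μ, ∃ (a : TOut I) (b : TOut J) (c : TOut K), cg a + cg b + cg c = 3 ∧
      (cg a : ℤ) = meanCount (M.pA · ω.2.1 ω.2.2) ∧
      (cg b : ℤ) = meanCount (M.pB · ω.2.2 ω.1) ∧ (cg c : ℤ) = meanCount (M.pC · ω.1 ω.2.1) := by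
    filter_upwards [ae_add_eq_three h, hmean] with ω hsum hω
    obtain ⟨a, b, c, hne⟩ := M.exists_joint_ne_zero ω
    exact ⟨a, b, c, hsum a b c hne, hω a b c hne⟩
  obtain ⟨tα, tβ, tγ, hα, hβ, hγ, ht⟩ := exists_tokens_of_add_eq_three
    (μα := M.μα) (μβ := M.μβ) (μγ := M.μγ) (a := fun β γ => meanCount (M.pA · β γ))
    (b := fun γ α => meanCount (M.pB · γ α)) (c := fun α β => meanCount (M.pC · α β))
    (measurable_meanCount.comp (measurable_pi_lambda _ M.measurable_pB))
    (measurable_meanCount.comp (measurable_pi_lambda _ M.measurable_pC))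
    (hcounts.mono fun ω ⟨a, b, c, hsum, ha, hb, hc⟩ => by
      rw [← ha, ← hb, ← hc]
      exact_mod_cast hsum)
    (hcounts.mono fun ω ⟨a, b, c, _, ha, hb, hc⟩ =>
      ⟨ha ▸ cg_mem_Icc a, hb ▸ cg_mem_Icc b, hc ▸ cg_mem_Icc c⟩)
    (hfreq h201) (hfreq h210)
  refine ⟨⟨tα, tβ, tγ, hα, hβ, hγ, ?_⟩⟩
  filter_upwards [hmean, ht] with ω hω ⟨htA, htB, htC⟩ a b c hne
  obtain ⟨ha, hb, hc⟩ := hω a b c hne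
  simp only [tokCounts, Prod.mk.injEq]
  exact ⟨by exact_mod_cast (ha.trans htA).symm, by exact_mod_cast (hb.trans htB).symm,
    by exact_mod_cast (hc.trans htC).symm⟩

end TriangleModel

namespace TokenStrategy

variable (T : TokenStrategy M)

/-- The same strategy with the parties renamed cyclically. -/
def rotate : TokenStrategy M.rotate where
  tα := T.tβ
  tβ := T.tγ
  tγ := T.tα
  measurable_tα := T.measurable_tβ
  measurable_tβ := T.measurable_tγ
  measurable_tγ := T.measurable_tα
  tokCounts_eq := by
    filter_upwards [ae_rotate T.tokCounts_eq] with ω hω b c a hne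
    have h := hω a b c (by rwa [← M.joint_rotate])
    simp only [tokCounts, Prod.mk.injEq] at h ⊢
    exact ⟨h.2.1, h.2.2, h.1⟩

/-- The tokens emitted by the three sources. -/
def tokens (ω : Λα × Λβ × Λγ) : Bool × Bool × Bool := (T.tα ω.1, T.tβ ω.2.1, T.tγ ω.2.2)

lemma measurable_tokens : Measurable T.tokens :=
  (T.measurable_tα.comp measurable_fst).prodMk <|
    ((T.measurable_tβ.comp measurable_fst).prodMk (T.measurable_tγ.comp measurable_snd)).comp
      measurable_snd

/-- The probability that the source `α` emits the token `true`. -/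
noncomputable def rα : ℝ := M.μα.real (T.tα ⁻¹' {true})

/-- The probability that the source `β` emits the token `true`. -/
noncomputable def rβ : ℝ := M.μβ.real (T.tβ ⁻¹' {true})

/-- The probability that the source `γ` emits the token `true`. -/
noncomputable def rγ : ℝ := M.μγ.real (T.tγ ⁻¹' {true})

/-- The probability that the sources emit the tokens `s` and the outcomes are `a, b, c`. -/
noncomputable def weight (s : Bool × Bool × Bool) (a : TOut I) (b : TOut J) (c : TOut K) : ℝ :=
  ∫ ω in T.tokens ⁻¹' {s}, M.joint a b c ω ∂M.μ

variable {T} {s : Bool × Bool × Bool} {a : TOut I} {b : TOut J} {c : TOut K}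

lemma weight_nonneg : 0 ≤ T.weight s a b c :=
  integral_nonneg (M.joint_nonneg a b c)

lemma dist_eq_sum_weight : M.dist a b c = ∑ s, T.weight s a b c :=
  integral_eq_sum_fiber T.measurable_tokens (M.integrable_joint a b c)

lemma weight_eq_zero (h : tokCounts s ≠ (cg a, cg b, cg c)) : T.weight s a b c = 0 := by
  refine setIntegral_eq_zero_of_ae_eq_zero (T.tokCounts_eq.mono fun ω hω hs => ?_)
  by_contra hne
  exact h (hs ▸ hω a b c hne)

lemma dist_eq_weight (hs : ∀ b, s ≠ (b, b, b)) (h : tokCounts s = (cg a, cg b, cg c)) :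
    M.dist a b c = T.weight s a b c := by
  rw [dist_eq_sum_weight (T := T), Fintype.sum_eq_single s fun t ht => weight_eq_zero fun h' => ?_]
  exact ht (eq_of_tokCounts_eq hs (h'.trans h.symm))

lemma weight_rotate : T.rotate.weight (s.2.1, s.2.2, s.1) b c a = T.weight s a b c := by
  have hpre : (fun ω : Λα × Λβ × Λγ => (ω.2.1, ω.2.2, ω.1)) ⁻¹'
      (T.rotate.tokens ⁻¹' {(s.2.1, s.2.2, s.1)}) = T.tokens ⁻¹' {s} := by
    ext ω
    simp only [tokens, rotate, Set.mem_preimage, Set.mem_singleton_iff, Prod.ext_iff]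
    tauto
  rw [weight, ← M.measurePreserving_rotate_μ.setIntegral_preimage_emb
    measurableEmbedding_rotate, hpre]
  simp only [M.joint_rotate, weight]

lemma tokens_preimage_singleton :
    T.tokens ⁻¹' {s} = (T.tα ⁻¹' {s.1}) ×ˢ (T.tβ ⁻¹' {s.2.1}) ×ˢ (T.tγ ⁻¹' {s.2.2}) := by
  ext ω
  simp only [tokens, Set.mem_preimage, Set.mem_singleton_iff, Set.mem_prod, Prod.ext_iff]

-- Given the tokens of `β` and `γ`, the outcome of `A` is independent of the token of `α`.
lemma sum_sum_weight (t : Bool) (s : Bool × Bool) (a : TOut I) :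
    ∑ b, ∑ c, T.weight (t, s) a b c = bern T.rα t *
      ∫ q in (T.tβ ⁻¹' {s.1}) ×ˢ (T.tγ ⁻¹' {s.2}), M.pA a q.1 q.2 ∂M.μβ.prod M.μγ := by
  simp only [weight]
  rw [sum_sum_integral fun b c => (M.integrable_joint a b c).integrableOn]
  simp only [M.sum_sum_joint, tokens_preimage_singleton, TriangleModel.μ]
  have h := setIntegral_prod_mul (μ := M.μα) (ν := M.μβ.prod M.μγ) (fun _ => (1 : ℝ))
    (fun q : Λβ × Λγ => M.pA a q.1 q.2) (T.tα ⁻¹' {t}) ((T.tβ ⁻¹' {s.1}) ×ˢ (T.tγ ⁻¹' {s.2}))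
  rw [setIntegral_const, smul_eq_mul, mul_one,
    measureReal_preimage_singleton T.measurable_tα t] at h
  simpa only [one_mul, rα] using h

lemma sum_weight (s : Bool × Bool × Bool) :
    ∑ a, ∑ b, ∑ c, T.weight s a b c = tokProb T.rα T.rβ T.rγ s := by
  have hint (a) : Integrable (fun q : Λβ × Λγ => M.pA a q.1 q.2) (M.μβ.prod M.μγ) :=
    .of_mem_Icc 0 1 (M.measurable_pA a).aemeasurable
      (ae_of_all _ fun q => mem_Icc_of_mem_stdSimplex (M.pA_mem q.1 q.2) a)
  simp only [sum_sum_weight, ← Finset.mul_sum]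
  rw [← integral_finsetSum _ fun a _ => (hint a).integrableOn]
  simp only [(M.pA_mem _ _).2, setIntegral_const, smul_eq_mul, mul_one, measureReal_prod_prod]
  rw [measureReal_preimage_singleton T.measurable_tβ s.2.1,
    measureReal_preimage_singleton T.measurable_tγ s.2.2, ← mul_assoc]
  rfl

variable (T) in
lemma cgP_dist (x y z : ℕ) : cgP M.dist x y z = tcP T.rα T.rβ T.rγ x y z := by
  have hterm (a : TOut I) (b : TOut J) (c : TOut K) (s : Bool × Bool × Bool) :
      (if cg a = x ∧ cg b = y ∧ cg c = z then T.weight s a b c else 0) =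
        if tokCounts s = (x, y, z) then T.weight s a b c else 0 := by
    by_cases hs : tokCounts s = (cg a, cg b, cg c)
    · simp only [hs, Prod.mk.injEq]
    · simp only [weight_eq_zero hs, ite_self]
  calc cgP M.dist x y z
      = ∑ a, ∑ b, ∑ c, ∑ s, if cg a = x ∧ cg b = y ∧ cg c = z then T.weight s a b c else 0 := by
        simp only [cgP, dist_eq_sum_weight (T := T), Finset.sum_ite_irrel, Finset.sum_const_zero]
    _ = ∑ s, ∑ a, ∑ b, ∑ c, if tokCounts s = (x, y, z) then T.weight s a b c else 0 := by
        simp only [hterm]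
        rw [Finset.sum_comm (s := .univ (α := Bool × Bool × Bool))]
        exact Fintype.sum_congr _ _ fun a => Finset.sum_comm_cycle
    _ = tcP T.rα T.rβ T.rγ x y z := by
        simp only [Finset.sum_ite_irrel, Finset.sum_const_zero, sum_weight, tcP_eq_sum]

theorem exists_of_cgP_eq_tcP {pα pβ pγ : ℝ} (hpα : pα ∈ Set.Ioo (0 : ℝ) 1)
    (hpβ : pβ ∈ Set.Ioo (0 : ℝ) 1) (hpγ : pγ ∈ Set.Ioo (0 : ℝ) 1)
    (hTC : ∀ x y z, cgP M.dist x y z = tcP pα pβ pγ x y z) :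
    ∃ T : TokenStrategy M, T.rα = pα ∧ T.rβ = pβ ∧ T.rγ = pγ := by
  have hne (s : Bool × Bool × Bool) (hs : ∀ b, s ≠ (b, b, b)) {x y z : ℕ}
      (h : tokCounts s = (x, y, z)) : cgP M.dist x y z ≠ 0 :=
    (hTC x y z).trans_ne (tcP_ne_zero hpα hpβ hpγ hs h)
  obtain ⟨T⟩ := TriangleModel.nonempty_tokenStrategy
    (fun x y z h => (hTC x y z).trans (tcP_eq_zero_of_add_ne h))
    (hne (true, true, false) (by decide) rfl) (hne (false, true, false) (by decide) rfl)
  exact ⟨T, tcP_injective hpα hpβ hpγ fun x y z => (T.cgP_dist x y z).symm.trans (hTC x y z)⟩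

/-- The outcome indices given that the tokens circulate clockwise (`t = true`) or anticlockwise
(`t = false`), that is, that all three sources emit `t`: the paper's `q(i, j, k | t)`. -/
noncomputable def orientationDist (T : TokenStrategy M) (t : Bool) (i : I) (j : J) (k : K) : ℝ :=
  T.weight (t, t, t) (.one i) (.one j) (.one k) / tokProb T.rα T.rβ T.rγ (t, t, t)

variable (T) (hα : T.rα ∈ Set.Ioo 0 1) (hβ : T.rβ ∈ Set.Ioo 0 1) (hγ : T.rγ ∈ Set.Ioo 0 1)
  {t : Bool} {i : I} {j : J} {k : K}

lemma orientationDist_rotate : T.rotate.orientationDist t j k i = T.orientationDist t i j k := by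
  rw [orientationDist, weight_rotate (s := (t, t, t))]
  exact congrArg _ (tokProb_rotate (t, t, t))

lemma sum_sum_weight_diag (t : Bool) (a : TOut I) :
    ∑ b, ∑ c, T.weight (t, t, t) a b c =
      ∑ j, ∑ k, T.weight (t, t, t) a (.one j) (.one k) := by
  rw [sum_eq_sum_one fun b hb => Finset.sum_eq_zero fun c _ => weight_eq_zero fun h => hb ?_]
  · refine Fintype.sum_congr _ _ fun j => sum_eq_sum_one fun c hc => weight_eq_zero fun h => hc ?_
    exact (congrArg (·.2.2) ((tokCounts_diag t).symm.trans h)).symm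
  · exact (congrArg (·.2.1) ((tokCounts_diag t).symm.trans h)).symm

lemma sum_sum_weight_not_diag (t : Bool) (i : I) :
    ∑ b, ∑ c, T.weight (!t, t, t) (.one i) b c =
      M.dist (.one i) (.extremal t) (.extremal !t) := by
  have hcounts {b : TOut J} {c : TOut K}
      (h : tokCounts (!t, t, t) = (cg (.one i : TOut I), cg b, cg c)) :
      b = .extremal t ∧ c = .extremal !t := by
    rw [tokCounts_not_diag, Prod.mk.injEq, Prod.mk.injEq] at h
    exact ⟨cg_eq_tokOut_not_iff.1 h.2.1.symm, cg_eq_tokOut_not_iff.1 (by simpa using h.2.2.symm)⟩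
  rw [Fintype.sum_eq_single (.extremal t) fun b hb => Finset.sum_eq_zero fun c _ =>
      weight_eq_zero fun h => hb (hcounts h).1,
    Fintype.sum_eq_single (.extremal !t) fun c hc => weight_eq_zero fun h => hc (hcounts h).2]
  refine (dist_eq_weight (not_diag_ne_diag t) ?_).symm
  rw [tokCounts_not_diag, cg_eq_tokOut_not_iff.2 rfl, cg_eq_tokOut_not_iff.2 rfl, Bool.not_not]
  rfl

include hα in
lemma orientationDist_marginal_fst :
    ∑ j, ∑ k, T.orientationDist t i j k = M.dist (.one i) (.extremal t) (.extremal !t) /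
      cgP M.dist 1 (tokOut t !t) (tokOut (!t) t) := by
  rw [T.cgP_dist, tcP_of_tokCounts_eq (not_diag_ne_diag t) (tokCounts_not_diag t),
    ← sum_sum_weight_not_diag (T := T)]
  simp only [orientationDist, ← Finset.sum_div, ← sum_sum_weight_diag, sum_sum_weight, tokProb,
    mul_assoc, mul_div_mul_left _ _ (bern_pos hα _).ne']

include hβ in
lemma orientationDist_marginal_snd :
    ∑ i, ∑ k, T.orientationDist t i j k = M.dist (.extremal !t) (.one j) (.extremal t) /
      cgP M.dist (tokOut (!t) t) 1 (tokOut t !t) := by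
  have h := T.rotate.orientationDist_marginal_fst hβ (t := t) (i := j)
  simp only [orientationDist_rotate] at h
  rw [Finset.sum_comm, h, ← cgP_rotate (P := M.dist)]
  simp only [M.dist_rotate]

include hγ in
lemma orientationDist_marginal_thd :
    ∑ i, ∑ j, T.orientationDist t i j k = M.dist (.extremal t) (.extremal !t) (.one k) /
      cgP M.dist (tokOut t !t) (tokOut (!t) t) 1 := by
  have h := T.rotate.orientationDist_marginal_snd hγ (t := t) (j := k)
  simp only [orientationDist_rotate] at h
  rw [Finset.sum_comm, h, ← cgP_rotate (P := M.dist)]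
  simp only [M.dist_rotate]

include hα hβ hγ

lemma orientationDist_nonneg : 0 ≤ T.orientationDist t i j k :=
  div_nonneg weight_nonneg (tokProb_pos hα hβ hγ _).le

lemma dist_one_eq_orientationDist : M.dist (.one i) (.one j) (.one k) =
    tokProb T.rα T.rβ T.rγ (true, true, true) * T.orientationDist true i j k +
      tokProb T.rα T.rβ T.rγ (false, false, false) * T.orientationDist false i j k := by
  have hsplit : ∑ s, T.weight s (.one i) (.one j) (.one k) =
      ∑ t : Bool, T.weight (t, t, t) (.one i) (.one j) (.one k) := by
    refine (Fintype.sum_of_injective (fun t : Bool => (t, t, t)) (fun _ _ h => (Prod.ext_iff.1 h).1)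
      _ _ (fun s hs => weight_eq_zero fun h => hs ?_) fun _ => rfl).symm
    exact exists_eq_diag_of_tokCounts_eq h
  rw [dist_eq_sum_weight (T := T), hsplit]
  simp only [Fintype.sum_bool, orientationDist, mul_div_cancel₀ _ (tokProb_pos hα hβ hγ _).ne']

lemma sum_orientationDist : ∑ i, ∑ j, ∑ k, T.orientationDist t i j k = 1 := by
  have hone (a : TOut I) (ha : cg a ≠ 1) : ∑ b, ∑ c, T.weight (t, t, t) a b c = 0 :=
    Finset.sum_eq_zero fun b _ => Finset.sum_eq_zero fun c _ => weight_eq_zero fun h =>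
      ha (congrArg (·.1) ((tokCounts_diag t).symm.trans h)).symm
  have h := sum_weight (T := T) (t, t, t)
  rw [sum_eq_sum_one hone] at h
  simp only [orientationDist, ← Finset.sum_div, ← sum_sum_weight_diag, h]
  exact div_self (tokProb_pos hα hβ hγ _).ne'

end TokenStrategy

end TokenStrategies

/-- if a triangle distribution `P` admits a local model and its
coarse-graining is the single-token TC distribution with parameters
`(pα, pβ, pγ) ∈ (0,1)³`, then there exist conditional distributions
`q(·|cw)`, `q(·|acw)` with the stated marginal and mixture properties
(`cw` is encoded by `true`, `acw` by `false`). -/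
theorem stmt_4 {IA IB IC : Type}
    [Fintype IA] [DecidableEq IA] [Fintype IB] [DecidableEq IB] [Fintype IC] [DecidableEq IC]
    {Λα Λβ Λγ : Type}
    [MeasurableSpace Λα] [MeasurableSpace Λβ] [MeasurableSpace Λγ]
    (μα : Measure Λα) (μβ : Measure Λβ) (μγ : Measure Λγ)
    [IsProbabilityMeasure μα] [IsProbabilityMeasure μβ] [IsProbabilityMeasure μγ]
    (pA : TOut IA → Λβ → Λγ → ℝ) (pB : TOut IB → Λα → Λγ → ℝ) (pC : TOut IC → Λα → Λβ → ℝ)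
    (hmA : ∀ a, Measurable fun q : Λβ × Λγ => pA a q.1 q.2)
    (hmB : ∀ b, Measurable fun q : Λα × Λγ => pB b q.1 q.2)
    (hmC : ∀ c, Measurable fun q : Λα × Λβ => pC c q.1 q.2)
    (hA : ∀ x y, (∀ a, 0 ≤ pA a x y) ∧ ∑ a, pA a x y = 1)
    (hB : ∀ x y, (∀ b, 0 ≤ pB b x y) ∧ ∑ b, pB b x y = 1)
    (hC : ∀ x y, (∀ c, 0 ≤ pC c x y) ∧ ∑ c, pC c x y = 1)
    (P : TOut IA → TOut IB → TOut IC → ℝ)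
    (hP : ∀ a b c, P a b c =
      ∫ xα, ∫ xβ, ∫ xγ, pA a xβ xγ * pB b xα xγ * pC c xα xβ ∂μγ ∂μβ ∂μα)
    (pα pβ pγ : ℝ)
    (hpα : pα ∈ Set.Ioo (0:ℝ) 1) (hpβ : pβ ∈ Set.Ioo (0:ℝ) 1) (hpγ : pγ ∈ Set.Ioo (0:ℝ) 1)
    (hTC : ∀ x y z : ℕ, cgP P x y z = tcP pα pβ pγ x y z) :
    ∃ qcw qacw : IA → IB → IC → ℝ,
      (∀ i j k, 0 ≤ qcw i j k) ∧ (∀ i j k, 0 ≤ qacw i j k) ∧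
      (∑ i, ∑ j, ∑ k, qcw i j k) = 1 ∧ (∑ i, ∑ j, ∑ k, qacw i j k) = 1 ∧
      (∀ i, (∑ j, ∑ k, qcw i j k) = P (TOut.one i) TOut.two TOut.zero / cgP P 1 2 0) ∧
      (∀ j, (∑ i, ∑ k, qcw i j k) = P TOut.zero (TOut.one j) TOut.two / cgP P 0 1 2) ∧
      (∀ k, (∑ i, ∑ j, qcw i j k) = P TOut.two TOut.zero (TOut.one k) / cgP P 2 0 1) ∧
      (∀ i, (∑ j, ∑ k, qacw i j k) = P (TOut.one i) TOut.zero TOut.two / cgP P 1 0 2) ∧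
      (∀ j, (∑ i, ∑ k, qacw i j k) = P TOut.two (TOut.one j) TOut.zero / cgP P 2 1 0) ∧
      (∀ k, (∑ i, ∑ j, qacw i j k) = P TOut.zero TOut.two (TOut.one k) / cgP P 0 2 1) ∧
      (∀ i j k, pα * pβ * pγ * qcw i j k
          + (1 - pα) * (1 - pβ) * (1 - pγ) * qacw i j k
          = P (TOut.one i) (TOut.one j) (TOut.one k)) := by
  let M : TriangleModel (TOut IA) (TOut IB) (TOut IC) Λα Λβ Λγ :=
    { μα, μβ, μγ, pA, pC
      pB := fun b γ α => pB b α γ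
      measurable_pA := hmA
      measurable_pB := fun b => (hmB b).comp measurable_swap
      measurable_pC := hmC
      pA_mem := hA
      pB_mem := fun γ α => hB α γ
      pC_mem := hC }
  obtain rfl : P = M.dist := by
    funext a b c
    rw [hP, M.dist_eq_integral]
  obtain ⟨T, rfl, rfl, rfl⟩ := TokenStrategy.exists_of_cgP_eq_tcP hpα hpβ hpγ hTC
  exact ⟨T.orientationDist true, T.orientationDist false,
    fun _ _ _ => T.orientationDist_nonneg hpα hpβ hpγ,
    fun _ _ _ => T.orientationDist_nonneg hpα hpβ hpγ,
    T.sum_orientationDist hpα hpβ hpγ, T.sum_orientationDist hpα hpβ hpγ,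
    fun _ => T.orientationDist_marginal_fst hpα, fun _ => T.orientationDist_marginal_snd hpβ,
    fun _ => T.orientationDist_marginal_thd hpγ, fun _ => T.orientationDist_marginal_fst hpα,
    fun _ => T.orientationDist_marginal_snd hpβ, fun _ => T.orientationDist_marginal_thd hpγ,
    fun _ _ _ => (T.dist_one_eq_orientationDist hpα hpβ hpγ).symm⟩
end

section
/- Let c ∈ [0,1], R ∈ [0,1], and F₁, F₂ ∈ [0,1] with F₁·F₂ ≥ R. Then (c + √(1−F₁²))·(c + √(1−F₂²)) ≤ (c + √(1−R))². -/
/-!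
For a nonnegative concave function `f`, AM-GM bounds `f x * f y` by the square of the mean of `f x`
and `f y`, and concavity bounds this mean by the value of `f` at the midpoint of `x` and `y`. Take
`f z = c + √z`, `x = 1 - F₁ ^ 2` and `y = 1 - F₂ ^ 2`: their midpoint `1 - (F₁ ^ 2 + F₂ ^ 2) / 2` is
at most `1 - F₁ * F₂ ≤ 1 - R`, and `f` is increasing.
-/

section Concave

variable {𝕜 E : Type*} [Field 𝕜] [LinearOrder 𝕜] [IsStrictOrderedRing 𝕜]
  [AddCommGroup E] [Module 𝕜 E] {s : Set E} {x y : E}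

theorem midpoint_le_map_midpoint_of_concaveOn {β : Type*} [AddCommGroup β] [PartialOrder β]
    [Module 𝕜 β] {f : E → β} (hf : ConcaveOn 𝕜 s f) (hx : x ∈ s) (hy : y ∈ s) :
    midpoint 𝕜 (f x) (f y) ≤ f (midpoint 𝕜 x y) := by
  have half_nonneg : (0 : 𝕜) ≤ ⅟2 := invOf_nonneg.2 zero_le_two
  simpa only [midpoint_eq_smul_add, smul_add] using
    hf.2 hx hy half_nonneg half_nonneg invOf_two_add_invOf_two

theorem mul_le_sq_map_midpoint_of_concaveOn {f : E → 𝕜} (hf : ConcaveOn 𝕜 s f) (hx : x ∈ s)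
    (hy : y ∈ s) (hfxy : 0 ≤ f x + f y) : f x * f y ≤ f (midpoint 𝕜 x y) ^ 2 := by
  have hmean : (f x + f y) / 2 ≤ f (midpoint 𝕜 x y) := by
    simpa only [midpoint_eq_smul_add, smul_eq_mul, invOf_eq_inv, inv_mul_eq_div] using
      midpoint_le_map_midpoint_of_concaveOn hf hx hy
  calc f x * f y ≤ ((f x + f y) / 2) ^ 2 := by linarith [four_mul_le_sq_add (f x) (f y)]
    _ ≤ f (midpoint 𝕜 x y) ^ 2 := by gcongr

end Concave

theorem concaveOn_const_add_sqrt (c : ℝ) : ConcaveOn ℝ (Set.Ici 0) fun x ↦ c + √x :=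
  (concaveOn_const c (convex_Ici 0)).add Real.strictConcaveOn_sqrt.concaveOn

theorem midpoint_one_sub_sq_le (a b : ℝ) :
    midpoint ℝ (1 - a ^ 2) (1 - b ^ 2) ≤ 1 - a * b := by
  rw [midpoint_eq_smul_add, invOf_eq_inv, smul_eq_mul]
  linarith [two_mul_le_add_sq a b]

theorem stmt_8_general {c R F₁ F₂ : ℝ} (hc : 0 ≤ c) (hF₁ : |F₁| ≤ 1) (hF₂ : |F₂| ≤ 1)
    (h : R ≤ F₁ * F₂) :
    (c + √(1 - F₁ ^ 2)) * (c + √(1 - F₂ ^ 2)) ≤ (c + √(1 - R)) ^ 2 := by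
  have hx : 0 ≤ 1 - F₁ ^ 2 := sub_nonneg.2 ((sq_le_one_iff_abs_le_one F₁).2 hF₁)
  have hy : 0 ≤ 1 - F₂ ^ 2 := sub_nonneg.2 ((sq_le_one_iff_abs_le_one F₂).2 hF₂)
  have hmid : midpoint ℝ (1 - F₁ ^ 2) (1 - F₂ ^ 2) ≤ 1 - R :=
    (midpoint_one_sub_sq_le F₁ F₂).trans (sub_le_sub_left h 1)
  calc (c + √(1 - F₁ ^ 2)) * (c + √(1 - F₂ ^ 2))
      ≤ (c + √(midpoint ℝ (1 - F₁ ^ 2) (1 - F₂ ^ 2))) ^ 2 :=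
        mul_le_sq_map_midpoint_of_concaveOn (concaveOn_const_add_sqrt c) hx hy (by positivity)
    _ ≤ (c + √(1 - R)) ^ 2 := by gcongr

/-- under the fidelity-product constraint `F₁ F₂ ≥ R`, the guessing
expression is maximized at `F₁ = F₂ = √R`. -/
theorem stmt_8 (c R F₁ F₂ : ℝ) (hc : c ∈ Set.Icc (0:ℝ) 1) (hR : R ∈ Set.Icc (0:ℝ) 1)
    (hF₁ : F₁ ∈ Set.Icc (0:ℝ) 1) (hF₂ : F₂ ∈ Set.Icc (0:ℝ) 1) (h : R ≤ F₁ * F₂) :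
    (c + Real.sqrt (1 - F₁ ^ 2)) * (c + Real.sqrt (1 - F₂ ^ 2)) ≤
      (c + Real.sqrt (1 - R)) ^ 2 :=
  stmt_8_general hc.1 ((abs_of_nonneg hF₁.1).trans_le hF₁.2)
    ((abs_of_nonneg hF₂.1).trans_le hF₂.2) h
end

section
/- Let (p_k)_{k∈K} be a finite family of nonnegative reals with Σ_k p_k = 1, let c_k ∈ [0,1] for each k, and let r ∈ [0, 1/2]. If Σ_k p_k · c_k·√(1−c_k²) ≥ r, then Σ_k p_k · h(c_k²) ≥ h((1 − √(1 − 4r²))/2). -/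
/-- Binary entropy (natural logarithm; the inequality is base-independent). -/
noncomputable def binEnt (x : ℝ) : ℝ := -(x * Real.log x) - (1 - x) * Real.log (1 - x)

/-!
A pure two-qubit state with Schmidt spectrum `{x, 1 - x}`, `x = c²`, has concurrence
`C = 2 √(x (1 - x))`, and its entanglement entropy `h(x)` is the function
`ℰ(C) = h((1 - √(1 - C²)) / 2)` of `C`. Since `ℰ` is increasing and convex, the bound is Jensen's
inequality for `ℰ`. Convexity becomes transparent in the hyperbolic coordinate `C = 1 / cosh t`:
there `ℰ'(C) = t / sinh t`, which decreases in `t`, hence increases in `C`, because `sinh` is convex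
on `[0, ∞)` and vanishes at `0`.
-/

lemma binEnt_eq_binEntropy (x : ℝ) : binEnt x = Real.binEntropy x := by
  rw [Real.binEntropy_eq_negMulLog_add_negMulLog_one_sub, Real.negMulLog, Real.negMulLog, binEnt]
  ring

section

open Real Set

lemma convexOn_sinh : ConvexOn ℝ (Ici 0) sinh := by
  refine MonotoneOn.convexOn_of_deriv (convex_Ici 0) continuous_sinh.continuousOn
    differentiable_sinh.differentiableOn ?_
  rw [Real.deriv_sinh]
  exact cosh_strictMonoOn.monotoneOn.mono interior_subset

lemma antitoneOn_div_sinh : AntitoneOn (fun t : ℝ => t / sinh t) (Ioi 0) := by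
  intro t (ht : 0 < t) u (hu : 0 < u) htu
  have hsecant : sinh t / t ≤ sinh u / u := by
    simpa using convexOn_sinh.secant_mono self_mem_Ici ht.le hu.le ht.ne' hu.ne' htu
  simpa using inv_anti₀ (div_pos (sinh_pos_iff.2 ht) ht) hsecant

/-- The entanglement entropy of a pure two-qubit state as a function of its concurrence
`C ∈ [0, 1]`, as in Wootters' formula for the entanglement of formation. The value is `log 2` for
`|C| ≥ 1`, where the square root vanishes. -/
noncomputable def concurrenceEntropy (C : ℝ) : ℝ := binEntropy ((1 - √(1 - C ^ 2)) / 2)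

lemma continuous_concurrenceEntropy : Continuous concurrenceEntropy := by
  unfold concurrenceEntropy
  fun_prop

lemma concurrenceEntropy_two_mul_sqrt {x : ℝ} (hx : x ∈ Icc 0 1) :
    concurrenceEntropy (2 * √(x * (1 - x))) = binEntropy x := by
  have hsq : √(x * (1 - x)) ^ 2 = x * (1 - x) :=
    sq_sqrt (mul_nonneg hx.1 (sub_nonneg.2 hx.2))
  have hgap : √(1 - (2 * √(x * (1 - x))) ^ 2) = |1 - 2 * x| := by
    rw [← sqrt_sq_eq_abs, mul_pow, hsq]
    ring_nf
  rw [concurrenceEntropy, hgap]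
  rcases abs_choice (1 - 2 * x) with h | h <;> rw [h]
  · ring_nf
  · rw [← binEntropy_one_sub]
    ring_nf

lemma two_mul_sqrt_mul_one_sub_mem_Icc (x : ℝ) : 2 * √(x * (1 - x)) ∈ Icc 0 1 := by
  have hsqrt : √(x * (1 - x)) ≤ 1 / 2 :=
    sqrt_le_iff.2 ⟨by norm_num, by linarith [sq_nonneg (x - 1 / 2)]⟩
  exact ⟨by positivity, by linarith⟩

lemma monotoneOn_concurrenceEntropy : MonotoneOn concurrenceEntropy (Ici 0) := by
  have hmem (C : ℝ) : (1 - √(1 - C ^ 2)) / 2 ∈ Icc 0 2⁻¹ := by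
    have hle : √(1 - C ^ 2) ≤ 1 := sqrt_le_one.2 (by linarith [sq_nonneg C])
    constructor <;> linarith [sqrt_nonneg (1 - C ^ 2)]
  intro C (hC : 0 ≤ C) D _ hCD
  refine binEntropy_strictMonoOn.monotoneOn (hmem C) (hmem D) ?_
  gcongr

lemma sqrt_one_sub_sq_mem_Ioo {C : ℝ} (hC : C ∈ Ioo 0 1) : √(1 - C ^ 2) ∈ Ioo 0 1 := by
  have hsq : C ^ 2 < 1 := pow_lt_one₀ hC.1.le hC.2 two_ne_zero
  refine ⟨sqrt_pos.2 (by linarith), (sqrt_lt' one_pos).2 ?_⟩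
  linarith [pow_pos hC.1 2]

lemma sinh_artanh_sqrt_one_sub_sq {C : ℝ} (hC : C ∈ Ioo 0 1) :
    sinh (artanh √(1 - C ^ 2)) = √(1 - C ^ 2) / C := by
  obtain ⟨hs0, hs1⟩ := sqrt_one_sub_sq_mem_Ioo hC
  rw [sinh_artanh ⟨by linarith, hs1⟩, sq_sqrt (sqrt_pos.1 hs0).le, sub_sub_cancel,
    sqrt_sq hC.1.le]

lemma hasDerivAt_sqrt_one_sub_sq {C : ℝ} (hC : 0 < 1 - C ^ 2) :
    HasDerivAt (fun C : ℝ => √(1 - C ^ 2)) (-C / √(1 - C ^ 2)) C := by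
  refine (((hasDerivAt_pow 2 C).const_sub 1).sqrt hC.ne').congr_deriv ?_
  field

lemma hasDerivAt_binEntropy_one_sub_div_two {s : ℝ} (hs : s ∈ Ioo (-1) 1) :
    HasDerivAt (fun s : ℝ => binEntropy ((1 - s) / 2)) (-artanh s) s := by
  obtain ⟨hs0, hs1⟩ := hs
  have hinner : HasDerivAt (fun s : ℝ => (1 - s) / 2) (-1 / 2) s :=
    ((hasDerivAt_id' s).const_sub 1).div_const 2
  refine ((hasDerivAt_binEntropy (by linarith) (by linarith)).comp s hinner).congr_deriv ?_
  rw [← log_div (by linarith) (by linarith), artanh_eq_half_log ⟨hs0.le, hs1.le⟩,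
    show (1 - (1 - s) / 2) / ((1 - s) / 2) = (1 + s) / (1 - s) by
      have : 1 - s ≠ 0 := by linarith
      field_simp
      ring]
  ring

lemma hasDerivAt_concurrenceEntropy {C : ℝ} (hC : C ∈ Ioo 0 1) :
    HasDerivAt concurrenceEntropy
      (artanh √(1 - C ^ 2) / sinh (artanh √(1 - C ^ 2))) C := by
  obtain ⟨hs0, hs1⟩ := sqrt_one_sub_sq_mem_Ioo hC
  have hentropy := hasDerivAt_binEntropy_one_sub_div_two ⟨by linarith, hs1⟩
  refine (hentropy.comp C (hasDerivAt_sqrt_one_sub_sq (sqrt_pos.1 hs0))).congr_deriv ?_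
  rw [sinh_artanh_sqrt_one_sub_sq hC]
  field

lemma antitoneOn_artanh_sqrt_one_sub_sq :
    AntitoneOn (fun C : ℝ => artanh √(1 - C ^ 2)) (Ioo 0 1) := by
  intro C hC D hD hCD
  obtain ⟨hs0, -⟩ := sqrt_one_sub_sq_mem_Ioo hD
  obtain ⟨-, hs1⟩ := sqrt_one_sub_sq_mem_Ioo hC
  have hC0 := hC.1.le
  exact artanh_le_artanh (by linarith) hs1 (by gcongr)

lemma convexOn_concurrenceEntropy : ConvexOn ℝ (Icc 0 1) concurrenceEntropy := by
  have hderiv : EqOn (deriv concurrenceEntropy)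
      ((fun t => t / sinh t) ∘ fun C => artanh √(1 - C ^ 2)) (Ioo 0 1) :=
    fun C hC => (hasDerivAt_concurrenceEntropy hC).deriv
  have hmaps : MapsTo (fun C : ℝ => artanh √(1 - C ^ 2)) (Ioo 0 1) (Ioi 0) :=
    fun C hC => artanh_pos (sqrt_one_sub_sq_mem_Ioo hC)
  refine MonotoneOn.convexOn_of_deriv (convex_Icc 0 1) continuous_concurrenceEntropy.continuousOn
    ?_ ?_ <;> rw [interior_Icc]
  · exact fun C hC => (hasDerivAt_concurrenceEntropy hC).differentiableAt.differentiableWithinAt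
  · exact (antitoneOn_div_sinh.comp antitoneOn_artanh_sqrt_one_sub_sq hmaps).congr hderiv.symm

lemma mul_sqrt_one_sub_sq_le (c : ℝ) : c * √(1 - c ^ 2) ≤ √(c ^ 2 * (1 - c ^ 2)) := by
  rw [sqrt_mul (sq_nonneg c), sqrt_sq_eq_abs]
  gcongr
  exact le_abs_self c

lemma concurrenceEntropy_sum_le_sum_binEntropy {ι : Type*} {t : Finset ι} {p x : ι → ℝ}
    (hp : ∀ i ∈ t, 0 ≤ p i) (hps : ∑ i ∈ t, p i = 1) (hx : ∀ i ∈ t, x i ∈ Icc 0 1) :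
    concurrenceEntropy (∑ i ∈ t, p i * (2 * √(x i * (1 - x i)))) ≤
      ∑ i ∈ t, p i * binEntropy (x i) :=
  calc concurrenceEntropy (∑ i ∈ t, p i * (2 * √(x i * (1 - x i))))
      ≤ ∑ i ∈ t, p i * concurrenceEntropy (2 * √(x i * (1 - x i))) :=
        convexOn_concurrenceEntropy.map_sum_le hp hps
          fun i _ => two_mul_sqrt_mul_one_sub_mem_Icc (x i)
    _ = ∑ i ∈ t, p i * binEntropy (x i) :=
        Finset.sum_congr rfl fun i hi => by rw [concurrenceEntropy_two_mul_sqrt (hx i hi)]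

end

theorem stmt_9_general {K : Type*} [Fintype K] (p c : K → ℝ)
    (hp : ∀ k, 0 ≤ p k) (hps : ∑ k, p k = 1) (hc : ∀ k, c k ∈ Set.Icc (-1 : ℝ) 1)
    (r : ℝ) (hr : 0 ≤ r) (h : r ≤ ∑ k, p k * (c k * √(1 - c k ^ 2))) :
    binEnt ((1 - √(1 - 4 * r ^ 2)) / 2) ≤ ∑ k, p k * binEnt (c k ^ 2) := by
  have hc_sq (k : K) : c k ^ 2 ∈ Set.Icc (0 : ℝ) 1 :=
    ⟨sq_nonneg _, (sq_le_one_iff_abs_le_one _).2 (abs_le.2 (hc k))⟩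
  have hmean : 2 * r ≤ ∑ k, p k * (2 * √(c k ^ 2 * (1 - c k ^ 2))) :=
    calc 2 * r ≤ 2 * ∑ k, p k * (c k * √(1 - c k ^ 2)) := by gcongr
      _ = ∑ k, p k * (2 * (c k * √(1 - c k ^ 2))) := by
        simp only [Finset.mul_sum, mul_left_comm]
      _ ≤ ∑ k, p k * (2 * √(c k ^ 2 * (1 - c k ^ 2))) := by
        gcongr with k
        · exact hp k
        · exact mul_sqrt_one_sub_sq_le (c k)
  simp only [binEnt_eq_binEntropy]
  calc Real.binEntropy ((1 - √(1 - 4 * r ^ 2)) / 2) = concurrenceEntropy (2 * r) := by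
        rw [concurrenceEntropy, mul_pow]
        norm_num
    _ ≤ concurrenceEntropy (∑ k, p k * (2 * √(c k ^ 2 * (1 - c k ^ 2)))) :=
        monotoneOn_concurrenceEntropy (Set.mem_Ici.2 (by positivity))
          (Set.mem_Ici.2 (by linarith)) hmean
    _ ≤ ∑ k, p k * Real.binEntropy (c k ^ 2) :=
        concurrenceEntropy_sum_le_sum_binEntropy (fun k _ => hp k) hps fun k _ => hc_sq k

/-- entanglement-of-formation optimization lower bound. -/
theorem stmt_9 {K : Type} [Fintype K] (p c : K → ℝ)
    (hp : ∀ k, 0 ≤ p k) (hps : ∑ k, p k = 1)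
    (hc : ∀ k, c k ∈ Set.Icc (0:ℝ) 1)
    (r : ℝ) (hr : r ∈ Set.Icc (0:ℝ) (1/2))
    (h : r ≤ ∑ k, p k * (c k * Real.sqrt (1 - c k ^ 2))) :
    binEnt ((1 - Real.sqrt (1 - 4 * r ^ 2)) / 2) ≤ ∑ k, p k * binEnt (c k ^ 2) :=
  stmt_9_general p c hp hps (fun k => ⟨by linarith [(hc k).1], (hc k).2⟩) r hr.1 h
end
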